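/- arXiv:1410.1945 — 4 statements merged into one kernel-verified Lean document; each statement's English description precedes it below -/
import Mathlib

section
/- Let n ≥ 1, a_1, a_2 > 0 with a_1 ≠ a_2, and let P_1, P_2 : ℝ × (ℝⁿ \ {0}) → ℝ be positively homogeneous of degree 2 in ξ with sup_{t∈ℝ, |ξ|=1} |P_k(t,ξ)| < ∞ (k = 1,2). Assume inf_{t∈ℝ, |ξ|=1} { (a_1 − a_2)² + 4 P_1(t,ξ) P_2(t,ξ) } > 0 and inf_{t∈ℝ, |ξ|=1} { a_1 a_2 − P_1(t,ξ) P_2(t,ξ) } > 0. For s ≥ 0 and c_k = √(a_k(1+s)), define φ_{1,2,3,4}(s,t,ξ) = ± (|ξ|/√2) · √( c_1² + c_2² ± √( (c_1² − c_2²)² + 4 P_1(t,ξ) P_2(t,ξ) |ξ|^{-4} ) ). Then all expressions under the square roots are positive, so the four values φ_j(s,t,ξ) are real, pairwise distinct, and for every δ > 0, inf { |φ_j(s,t,ξ) − φ_k(s,t,ξ)| : s ∈ [0,δ], t ∈ ℝ, |ξ| = 1, j ≠ k } > 0. -/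
open MeasureTheory Set

noncomputable section

lemma ck_core {A M d₁ d₂ D : ℝ} (hA : 0 < A) (hM : A ≤ M) (h1 : 0 < d₁) (h2 : 0 < d₂)
    (hD : d₁ ≤ D) (hAD : 4 * d₂ ≤ A ^ 2 - D) :
    0 < A - √D ∧ √(2 * d₂ / M) ≤ √(A - √D) ∧
      √d₁ / √(2 * M) ≤ √(A + √D) - √(A - √D) := by
  have hM0 : 0 < M := lt_of_lt_of_le hA hM
  have hR : 0 < √D := Real.sqrt_pos.2 (by linarith)
  have hRR : √D ^ 2 = D := Real.sq_sqrt (by linarith)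
  have hlt : √D < A := by
    apply lt_of_pow_lt_pow_left₀ 2 hA.le
    linarith
  have hx2 : √(A + √D) ^ 2 = A + √D := Real.sq_sqrt (by linarith)
  have hy2 : √(A - √D) ^ 2 = A - √D := Real.sq_sqrt (by linarith)
  refine ⟨by linarith, ?_, ?_⟩
  · apply Real.sqrt_le_sqrt
    rw [div_le_iff₀ hM0]
    nlinarith
  · have hK : 0 < √(2 * M) := Real.sqrt_pos.2 (by linarith)
    rw [div_le_iff₀ hK]
    have hx : √(A + √D) ≤ √(2 * M) := Real.sqrt_le_sqrt (by linarith)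
    have hy : √(A - √D) ≤ √(2 * M) := Real.sqrt_le_sqrt (by linarith)
    have hyx : √(A - √D) ≤ √(A + √D) := Real.sqrt_le_sqrt (by linarith)
    have hd : √d₁ ≤ √D := Real.sqrt_le_sqrt hD
    nlinarith [mul_le_mul_of_nonneg_left (add_le_add hx hy) (sub_nonneg.2 hyx)]

lemma ck_gap {r e A R : ℝ} (hr : 0 ≤ r) (he : 0 ≤ e) (hy : e ≤ √(A - R))
    (hxy : e ≤ √(A + R) - √(A - R)) (f : Fin 4 → ℝ)
    (hf : ∀ j, f j = (![1, -1, 1, -1] j) * r * √(A + (![1, 1, -1, -1] j) * R))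
    (j k : Fin 4) (hjk : j ≠ k) : r * e ≤ |f j - f k| := by
  have h0 : f 0 = r * √(A + R) := by simp [hf]
  have h1 : f 1 = -(r * √(A + R)) := by simp [hf]
  have h2 : f 2 = r * √(A - R) := by simp [hf, sub_eq_add_neg]
  have h3 : f 3 = -(r * √(A - R)) := by simp [hf, sub_eq_add_neg]
  have q0 : 0 ≤ r * e := mul_nonneg hr he
  have q1 := mul_le_mul_of_nonneg_left hy hr
  have q2 := mul_le_mul_of_nonneg_left hxy hr
  rw [mul_sub] at q2
  rw [le_abs]
  fin_cases j <;> fin_cases k <;> simp only [Fin.zero_eta, Fin.mk_one, Fin.reduceFinMk,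
    h0, h1, h2, h3, ne_eq, not_true_eq_false] at hjk ⊢ <;>
    first
    | (left; linarith)
    | (right; linarith)

/-- uniform strict hyperbolicity of the `4×4` system obtained
from the coupled Kirchhoff equations of Example 2.2; `c_k² = a_k(1+s)` and the
four characteristic roots `φ_j` are given by the explicit formula with all four
sign combinations. -/
theorem coupled_kirchhoff_strict_hyperbolicity
    (n : ℕ) (hn : 1 ≤ n) (a₁ a₂ : ℝ) (ha₁ : 0 < a₁) (ha₂ : 0 < a₂) (hne : a₁ ≠ a₂)
    (P₁ P₂ : ℝ → EuclideanSpace ℝ (Fin n) → ℝ)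
    -- P₁, P₂ positively homogeneous of degree 2 in ξ
    (hhom₁ : ∀ t : ℝ, ∀ ξ : EuclideanSpace ℝ (Fin n), ξ ≠ 0 → ∀ c : ℝ, 0 < c →
      P₁ t (c • ξ) = c ^ 2 * P₁ t ξ)
    (hhom₂ : ∀ t : ℝ, ∀ ξ : EuclideanSpace ℝ (Fin n), ξ ≠ 0 → ∀ c : ℝ, 0 < c →
      P₂ t (c • ξ) = c ^ 2 * P₂ t ξ)
    -- boundedness on the unit sphere
    (hbdd : ∃ C : ℝ, ∀ t : ℝ, ∀ ω ∈ Metric.sphere (0 : EuclideanSpace ℝ (Fin n)) 1,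
      |P₁ t ω| ≤ C ∧ |P₂ t ω| ≤ C)
    -- inf_{t, |ξ|=1} {(a₁−a₂)² + 4P₁P₂} > 0
    (hinf₁ : ∃ d > (0:ℝ), ∀ t : ℝ,
      ∀ ω ∈ Metric.sphere (0 : EuclideanSpace ℝ (Fin n)) 1,
        d ≤ (a₁ - a₂) ^ 2 + 4 * P₁ t ω * P₂ t ω)
    -- inf_{t, |ξ|=1} {a₁a₂ − P₁P₂} > 0
    (hinf₂ : ∃ d > (0:ℝ), ∀ t : ℝ,
      ∀ ω ∈ Metric.sphere (0 : EuclideanSpace ℝ (Fin n)) 1,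
        d ≤ a₁ * a₂ - P₁ t ω * P₂ t ω)
    -- the four characteristic roots
    (φ : ℝ → ℝ → EuclideanSpace ℝ (Fin n) → Fin 4 → ℝ)
    (hφ : ∀ s t : ℝ, ∀ ξ : EuclideanSpace ℝ (Fin n), ∀ j : Fin 4,
      φ s t ξ j = (![1, -1, 1, -1] j) * (‖ξ‖ / Real.sqrt 2) *
        Real.sqrt (a₁ * (1 + s) + a₂ * (1 + s) + (![1, 1, -1, -1] j) *
          Real.sqrt ((a₁ * (1 + s) - a₂ * (1 + s)) ^ 2 +
            4 * P₁ t ξ * P₂ t ξ * ‖ξ‖ ^ (-4 : ℝ)))) :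
    -- the expressions under the square roots are positive
    (∀ s : ℝ, 0 ≤ s → ∀ t : ℝ, ∀ ξ : EuclideanSpace ℝ (Fin n), ξ ≠ 0 →
      0 < (a₁ * (1 + s) - a₂ * (1 + s)) ^ 2 +
          4 * P₁ t ξ * P₂ t ξ * ‖ξ‖ ^ (-4 : ℝ) ∧
      0 < a₁ * (1 + s) + a₂ * (1 + s) -
          Real.sqrt ((a₁ * (1 + s) - a₂ * (1 + s)) ^ 2 +
            4 * P₁ t ξ * P₂ t ξ * ‖ξ‖ ^ (-4 : ℝ))) ∧
    -- the four roots are pairwise distinct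
    (∀ s : ℝ, 0 ≤ s → ∀ t : ℝ, ∀ ξ : EuclideanSpace ℝ (Fin n), ξ ≠ 0 →
      ∀ j k : Fin 4, j ≠ k → φ s t ξ j ≠ φ s t ξ k) ∧
    -- uniform gap on s ∈ [0,δ], t ∈ ℝ, |ξ| = 1
    (∀ δ : ℝ, 0 < δ → ∃ d > (0:ℝ), ∀ s ∈ Set.Icc 0 δ, ∀ t : ℝ,
      ∀ ω ∈ Metric.sphere (0 : EuclideanSpace ℝ (Fin n)) 1,
      ∀ j k : Fin 4, j ≠ k → d ≤ |φ s t ω j - φ s t ω k|) := by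
  obtain ⟨d₁, hd₁, hinf₁⟩ := hinf₁
  obtain ⟨d₂, hd₂, hinf₂⟩ := hinf₂
  have key : ∀ s : ℝ, 0 ≤ s → ∀ t : ℝ, ∀ ξ : EuclideanSpace ℝ (Fin n), ξ ≠ 0 →
      d₁ ≤ (a₁ * (1 + s) - a₂ * (1 + s)) ^ 2 + 4 * P₁ t ξ * P₂ t ξ * ‖ξ‖ ^ (-4 : ℝ) ∧
      4 * d₂ ≤ (a₁ * (1 + s) + a₂ * (1 + s)) ^ 2 - ((a₁ * (1 + s) - a₂ * (1 + s)) ^ 2 +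
        4 * P₁ t ξ * P₂ t ξ * ‖ξ‖ ^ (-4 : ℝ)) := by
    intro s hs t ξ hξ
    have hpos : 0 < ‖ξ‖ := norm_pos_iff.2 hξ
    have hω : (‖ξ‖⁻¹ • ξ) ∈ Metric.sphere (0 : EuclideanSpace ℝ (Fin n)) 1 := by
      simp [norm_smul, hpos.ne']
    have e1 := hhom₁ t ξ hξ ‖ξ‖⁻¹ (inv_pos.2 hpos)
    have e2 := hhom₂ t ξ hξ ‖ξ‖⁻¹ (inv_pos.2 hpos)
    have hpw : ‖ξ‖ ^ (-4 : ℝ) = ‖ξ‖⁻¹ ^ 2 * ‖ξ‖⁻¹ ^ 2 := by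
      rw [Real.rpow_neg hpos.le, ← pow_add, inv_pow]
      norm_cast
    have i1 := hinf₁ t _ hω
    have i2 := hinf₂ t _ hω
    have hQ : 4 * P₁ t ξ * P₂ t ξ * ‖ξ‖ ^ (-4 : ℝ) =
        4 * (P₁ t (‖ξ‖⁻¹ • ξ) * P₂ t (‖ξ‖⁻¹ • ξ)) := by
      rw [e1, e2, hpw]; ring
    rw [hQ]
    generalize P₁ t (‖ξ‖⁻¹ • ξ) = p at *
    generalize P₂ t (‖ξ‖⁻¹ • ξ) = q at *
    have hσ : 0 ≤ (1 + s) ^ 2 - 1 := by nlinarith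
    have m1 := mul_nonneg hσ (sq_nonneg (a₁ - a₂))
    have m2 := mul_nonneg hσ (mul_pos ha₁ ha₂).le
    constructor <;> nlinarith
  have hApos : ∀ s : ℝ, 0 ≤ s → 0 < a₁ * (1 + s) + a₂ * (1 + s) := by
    intro s hs; positivity
  have h2 : 0 < √(2 : ℝ) := by positivity
  have gpos : ∀ M : ℝ, 0 < M → 0 < min √(2 * d₂ / M) (√d₁ / √(2 * M)) := by
    intro M hM
    apply lt_min <;> positivity
  have gap : ∀ M s : ℝ, 0 ≤ s → a₁ * (1 + s) + a₂ * (1 + s) ≤ M → ∀ t : ℝ,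
      ∀ ξ : EuclideanSpace ℝ (Fin n), ξ ≠ 0 → ∀ j k : Fin 4, j ≠ k →
      ‖ξ‖ / √2 * min √(2 * d₂ / M) (√d₁ / √(2 * M)) ≤ |φ s t ξ j - φ s t ξ k| := by
    intro M s hs hM t ξ hξ j k hjk
    obtain ⟨k1, k2⟩ := key s hs t ξ hξ
    obtain ⟨-, c1, c2⟩ := ck_core (hApos s hs) hM hd₁ hd₂ k1 k2
    exact ck_gap (by positivity) (gpos M ((hApos s hs).trans_le hM)).le
      ((min_le_left _ _).trans c1) ((min_le_right _ _).trans c2) (φ s t ξ) (hφ s t ξ) j k hjk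
  refine ⟨?_, ?_, ?_⟩
  · intro s hs t ξ hξ
    obtain ⟨k1, k2⟩ := key s hs t ξ hξ
    exact ⟨hd₁.trans_le k1, (ck_core (hApos s hs) le_rfl hd₁ hd₂ k1 k2).1⟩
  · intro s hs t ξ hξ j k hjk heq
    have hg := gap _ s hs le_rfl t ξ hξ j k hjk
    have hp := mul_pos (div_pos (norm_pos_iff.2 hξ) h2) (gpos _ (hApos s hs))
    rw [heq, sub_self, abs_zero] at hg
    linarith
  · intro δ hδ
    refine ⟨1 / √2 * min √(2 * d₂ / (a₁ * (1 + δ) + a₂ * (1 + δ)))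
      (√d₁ / √(2 * (a₁ * (1 + δ) + a₂ * (1 + δ)))),
      mul_pos (by positivity) (gpos _ (hApos δ hδ.le)), ?_⟩
    intro s hs t ω hω j k hjk
    have hn1 : ‖ω‖ = 1 := by simpa using hω
    have hne0 : ω ≠ 0 := by
      intro h
      simp [h] at hn1
    have hg := gap (a₁ * (1 + δ) + a₂ * (1 + δ)) s hs.1
      (by nlinarith [hs.2]) t ω hne0 j k hjk
    rwa [hn1] at hg
end
end

section
/- Let n ≥ 1 and let (f_0,f_1) be a nonzero pair in the analytic class 𝒜_{L²}: f_0 ∈ H¹(ℝⁿ), f_1 ∈ L²(ℝⁿ), (f_0,f_1) ≠ (0,0), and there exists η > 0 with ∫_{ℝⁿ} ( |ξ|² |f̂_0(ξ)|² + |f̂_1(ξ)|² ) e^{η|ξ|} dξ < ∞. Then (f_0,f_1) belongs to the Pohozhaev class 𝒫: f_0, f_1 ∈ H^σ(ℝⁿ) for every σ ≥ 0, and limsup_{j→∞} 2^j ( ∫_{ℝⁿ} |ξ|^{4·2^j + 2} |f̂_0(ξ)|² dξ + ∫_{ℝⁿ} |ξ|^{4·2^j} |f̂_1(ξ)|² dξ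 )^{−1/2^{j+2}} > 0. -/
open MeasureTheory Filter
open scoped ENNReal NNReal

noncomputable section


lemma aux_pow_le (m : ℕ) {η t : ℝ} (hη : 0 < η) (ht : 0 ≤ t) :
    t ^ m ≤ (m / η) ^ m * Real.exp (η * t) := by
  have h := Real.pow_div_factorial_le_exp (η * t) (by positivity) m
  have hf : (0:ℝ) < m.factorial := by positivity
  rw [div_le_iff₀ hf, mul_pow] at h
  have h2 : (m.factorial : ℝ) ≤ (m:ℝ) ^ m := by exact_mod_cast Nat.factorial_le_pow m
  rw [div_pow, div_mul_eq_mul_div, le_div_iff₀ (by positivity)]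
  calc t ^ m * η ^ m = η ^ m * t ^ m := by ring
    _ ≤ _ := h
    _ ≤ Real.exp (η * t) * (m:ℝ) ^ m := by gcongr
    _ = _ := by ring

lemma aux_weight (σ : ℝ) (hσ : 0 ≤ σ) {η : ℝ} (hη : 0 < η) :
    ∃ K : ℝ, 0 ≤ K ∧ ∀ t : ℝ, 0 ≤ t → (1 + t ^ 2) ^ σ ≤ K * Real.exp (η * t) := by
  obtain ⟨m, hm⟩ := exists_nat_ge (2 * σ)
  refine ⟨(m / η) ^ m * Real.exp η, by positivity, fun t ht => ?_⟩
  calc (1 + t ^ 2) ^ σ ≤ ((1 + t) ^ (2:ℝ)) ^ σ := by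
        apply Real.rpow_le_rpow (by positivity) _ hσ
        rw [Real.rpow_two]; nlinarith
    _ = (1 + t) ^ (2 * σ) := by rw [← Real.rpow_mul (by positivity)]
    _ ≤ (1 + t) ^ (m : ℝ) := Real.rpow_le_rpow_of_exponent_le (by linarith) hm
    _ = (1 + t) ^ m := Real.rpow_natCast _ _
    _ ≤ _ := aux_pow_le m hη (by positivity)
    _ = _ := by rw [mul_add, Real.exp_add, mul_one]; ring

lemma aux_enn {E : Type*} [NormedAddCommGroup E] (z : E) :
    (‖z‖₊ : ℝ≥0∞) ^ 2 = ENNReal.ofReal (‖z‖ ^ 2) := by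
  rw [ENNReal.ofReal_pow (norm_nonneg _), ofReal_norm, enorm_eq_nnnorm]

lemma aux_pos {n : ℕ} (hn : 1 ≤ n) (F : EuclideanSpace ℝ (Fin n) → ℂ) (k : ℕ)
    (hI : Integrable (fun ξ => ‖ξ‖ ^ k * ‖F ξ‖ ^ 2))
    (hF : ¬ F =ᵐ[(volume : Measure (EuclideanSpace ℝ (Fin n)))] 0) :
    0 < ∫ ξ, ‖ξ‖ ^ k * ‖F ξ‖ ^ 2 := by
  have h0 : ∀ ξ, 0 ≤ ‖ξ‖ ^ k * ‖F ξ‖ ^ 2 := fun ξ => by positivity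
  refine lt_of_le_of_ne (integral_nonneg h0) fun h => hF ?_
  have h1 := (integral_eq_zero_iff_of_nonneg h0 hI).1 h.symm
  haveI : Nonempty (Fin n) := ⟨⟨0, hn⟩⟩
  have h2 : ∀ᵐ ξ : EuclideanSpace ℝ (Fin n), ξ ≠ 0 := by
    simp [ae_iff]
  filter_upwards [h1, h2] with ξ h1 h2
  simpa [h2] using h1

/-- the inclusion `𝒜_{L²} ⊂ 𝒫` (nonzero analytic data belong to the
Pohozhaev class), stated on the Fourier side: `F0 = f̂_0`, `F1 = f̂_1`. -/
theorem analytic_subset_pohozhaev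
    (n : ℕ) (hn : 1 ≤ n)
    (F0 F1 : EuclideanSpace ℝ (Fin n) → ℂ)
    (hm0 : AEMeasurable F0 (volume : Measure (EuclideanSpace ℝ (Fin n))))
    (hm1 : AEMeasurable F1 (volume : Measure (EuclideanSpace ℝ (Fin n))))
    -- f_0 ∈ H¹(ℝⁿ)
    (hH1 : ∫⁻ ξ, ENNReal.ofReal (1 + ‖ξ‖ ^ 2) * (‖F0 ξ‖₊ : ℝ≥0∞) ^ 2 < ⊤)
    -- f_1 ∈ L²(ℝⁿ)
    (hL2 : ∫⁻ ξ, (‖F1 ξ‖₊ : ℝ≥0∞) ^ 2 < ⊤)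
    -- (f_0, f_1) ≠ (0, 0)
    (hne : ¬ (F0 =ᵐ[(volume : Measure (EuclideanSpace ℝ (Fin n)))] 0 ∧
              F1 =ᵐ[(volume : Measure (EuclideanSpace ℝ (Fin n)))] 0))
    -- the analyticity condition of `𝒜_{L²}`
    (hA : ∃ η > (0:ℝ), ∫⁻ ξ,
      ((‖ξ‖₊ : ℝ≥0∞) ^ 2 * (‖F0 ξ‖₊ : ℝ≥0∞) ^ 2 + (‖F1 ξ‖₊ : ℝ≥0∞) ^ 2) *
        ENNReal.ofReal (Real.exp (η * ‖ξ‖)) < ⊤) :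
    -- conclusion: (f_0, f_1) ∈ 𝒫
    (∀ σ : ℝ, 0 ≤ σ →
      (∫⁻ ξ, ENNReal.ofReal ((1 + ‖ξ‖ ^ 2) ^ σ) * (‖F0 ξ‖₊ : ℝ≥0∞) ^ 2 < ⊤) ∧
      (∫⁻ ξ, ENNReal.ofReal ((1 + ‖ξ‖ ^ 2) ^ σ) * (‖F1 ξ‖₊ : ℝ≥0∞) ^ 2 < ⊤)) ∧
    0 < Filter.limsup (fun j : ℕ => ENNReal.ofReal ((2:ℝ) ^ j *
        ((∫ ξ, ‖ξ‖ ^ (4 * 2 ^ j + 2) * ‖F0 ξ‖ ^ 2) +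
         (∫ ξ, ‖ξ‖ ^ (4 * 2 ^ j) * ‖F1 ξ‖ ^ 2)) ^ (-(1:ℝ) / 2 ^ (j + 2))))
      Filter.atTop := by
  obtain ⟨η, hη, hA⟩ := hA
  have key : ∀ ξ, ((‖ξ‖₊ : ℝ≥0∞) ^ 2 * (‖F0 ξ‖₊ : ℝ≥0∞) ^ 2 + (‖F1 ξ‖₊ : ℝ≥0∞) ^ 2) *
        ENNReal.ofReal (Real.exp (η * ‖ξ‖)) =
      ENNReal.ofReal ((‖ξ‖ ^ 2 * ‖F0 ξ‖ ^ 2 + ‖F1 ξ‖ ^ 2) * Real.exp (η * ‖ξ‖)) := by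
    intro ξ
    rw [aux_enn, aux_enn, aux_enn, ← ENNReal.ofReal_mul (by positivity),
      ← ENNReal.ofReal_add (by positivity) (by positivity), ← ENNReal.ofReal_mul (by positivity)]
  constructor
  · intro σ hσ
    obtain ⟨K, hK, hw⟩ := aux_weight σ hσ hη
    constructor
    · have hb : ∀ ξ, ENNReal.ofReal ((1 + ‖ξ‖ ^ 2) ^ σ) * (‖F0 ξ‖₊ : ℝ≥0∞) ^ 2 ≤
          ENNReal.ofReal (2 ^ σ) * (ENNReal.ofReal (1 + ‖ξ‖ ^ 2) * (‖F0 ξ‖₊ : ℝ≥0∞) ^ 2) +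
          ENNReal.ofReal K * (((‖ξ‖₊ : ℝ≥0∞) ^ 2 * (‖F0 ξ‖₊ : ℝ≥0∞) ^ 2 + (‖F1 ξ‖₊ : ℝ≥0∞) ^ 2) *
            ENNReal.ofReal (Real.exp (η * ‖ξ‖))) := by
        intro ξ
        rw [key, aux_enn]
        rw [← ENNReal.ofReal_mul (by positivity), ← ENNReal.ofReal_mul (by positivity),
          ← ENNReal.ofReal_mul (by positivity), ← ENNReal.ofReal_mul (by positivity),
          ← ENNReal.ofReal_add (by positivity) (by positivity)]
        apply ENNReal.ofReal_le_ofReal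
        have hs : (1 + ‖ξ‖ ^ 2) ^ σ ≤
            2 ^ σ * (1 + ‖ξ‖ ^ 2) + K * (‖ξ‖ ^ 2 * Real.exp (η * ‖ξ‖)) := by
          rcases le_total ‖ξ‖ 1 with h | h
          · have h1 : (1 + ‖ξ‖ ^ 2) ^ σ ≤ 2 ^ σ := by
              apply Real.rpow_le_rpow (by positivity) _ hσ
              nlinarith [norm_nonneg ξ]
            have h2 : (2:ℝ) ^ σ ≤ 2 ^ σ * (1 + ‖ξ‖ ^ 2) :=
              le_mul_of_one_le_right (by positivity) (by nlinarith [norm_nonneg ξ])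
            have h3 : 0 ≤ K * (‖ξ‖ ^ 2 * Real.exp (η * ‖ξ‖)) := by positivity
            linarith
          · have h1 := hw ‖ξ‖ (norm_nonneg _)
            have h2 : K * Real.exp (η * ‖ξ‖) ≤ K * (‖ξ‖ ^ 2 * Real.exp (η * ‖ξ‖)) := by
              apply mul_le_mul_of_nonneg_left _ hK
              exact le_mul_of_one_le_left (by positivity) (by nlinarith)
            have h3 : 0 ≤ (2:ℝ) ^ σ * (1 + ‖ξ‖ ^ 2) := by positivity
            linarith
        have h4 := mul_le_mul_of_nonneg_right hs (sq_nonneg ‖F0 ξ‖)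
        have h5 : 0 ≤ K * (‖F1 ξ‖ ^ 2 * Real.exp (η * ‖ξ‖)) := by positivity
        nlinarith
      refine lt_of_le_of_lt (lintegral_mono hb) ?_
      rw [lintegral_add_left', lintegral_const_mul' _ _ ENNReal.ofReal_ne_top,
        lintegral_const_mul' _ _ ENNReal.ofReal_ne_top]
      · exact ENNReal.add_lt_top.2 ⟨ENNReal.mul_lt_top ENNReal.ofReal_lt_top hH1,
          ENNReal.mul_lt_top ENNReal.ofReal_lt_top hA⟩
      · fun_prop
    · have hb : ∀ ξ, ENNReal.ofReal ((1 + ‖ξ‖ ^ 2) ^ σ) * (‖F1 ξ‖₊ : ℝ≥0∞) ^ 2 ≤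
          ENNReal.ofReal K * (((‖ξ‖₊ : ℝ≥0∞) ^ 2 * (‖F0 ξ‖₊ : ℝ≥0∞) ^ 2 + (‖F1 ξ‖₊ : ℝ≥0∞) ^ 2) *
            ENNReal.ofReal (Real.exp (η * ‖ξ‖))) := by
        intro ξ
        rw [key, aux_enn]
        rw [← ENNReal.ofReal_mul (by positivity), ← ENNReal.ofReal_mul (by positivity)]
        apply ENNReal.ofReal_le_ofReal
        have h4 := mul_le_mul_of_nonneg_right (hw ‖ξ‖ (norm_nonneg _)) (sq_nonneg ‖F1 ξ‖)
        have h5 : 0 ≤ K * (‖ξ‖ ^ 2 * ‖F0 ξ‖ ^ 2 * Real.exp (η * ‖ξ‖)) := by positivity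
        nlinarith
      refine lt_of_le_of_lt (lintegral_mono hb) ?_
      rw [lintegral_const_mul' _ _ ENNReal.ofReal_ne_top]
      exact ENNReal.mul_lt_top ENNReal.ofReal_lt_top hA
  · have hG : Integrable (fun ξ => (‖ξ‖ ^ 2 * ‖F0 ξ‖ ^ 2 + ‖F1 ξ‖ ^ 2) * Real.exp (η * ‖ξ‖)) := by
      refine ⟨AEMeasurable.aestronglyMeasurable (by fun_prop), ?_⟩
      rw [hasFiniteIntegral_iff_ofReal (ae_of_all _ fun ξ => by positivity)]
      simpa only [key] using hA
    set C : ℝ := (∫ ξ, (‖ξ‖ ^ 2 * ‖F0 ξ‖ ^ 2 + ‖F1 ξ‖ ^ 2) * Real.exp (η * ‖ξ‖)) + 1 with hC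
    have hC1 : 1 ≤ C := by
      have : 0 ≤ ∫ ξ, (‖ξ‖ ^ 2 * ‖F0 ξ‖ ^ 2 + ‖F1 ξ‖ ^ 2) * Real.exp (η * ‖ξ‖) :=
        integral_nonneg fun ξ => by positivity
      linarith
    have hbound : ∀ j : ℕ, ENNReal.ofReal (η / 4 * C⁻¹) ≤ ENNReal.ofReal ((2:ℝ) ^ j *
        ((∫ ξ, ‖ξ‖ ^ (4 * 2 ^ j + 2) * ‖F0 ξ‖ ^ 2) +
         (∫ ξ, ‖ξ‖ ^ (4 * 2 ^ j) * ‖F1 ξ‖ ^ 2)) ^ (-(1:ℝ) / 2 ^ (j + 2))) := by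
      intro j
      apply ENNReal.ofReal_le_ofReal
      set m : ℕ := 4 * 2 ^ j with hm
      set B : ℝ := (m / η) ^ m with hB
      have hB0 : 0 ≤ B := by positivity
      have hp : ∀ ξ : EuclideanSpace ℝ (Fin n), ‖ξ‖ ^ m ≤ B * Real.exp (η * ‖ξ‖) :=
        fun ξ => aux_pow_le m hη (norm_nonneg _)
      have hsum : ∀ ξ, ‖ξ‖ ^ (m + 2) * ‖F0 ξ‖ ^ 2 + ‖ξ‖ ^ m * ‖F1 ξ‖ ^ 2 ≤
          B * ((‖ξ‖ ^ 2 * ‖F0 ξ‖ ^ 2 + ‖F1 ξ‖ ^ 2) * Real.exp (η * ‖ξ‖)) := by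
        intro ξ
        have := mul_le_mul_of_nonneg_right (hp ξ)
          (show 0 ≤ ‖ξ‖ ^ 2 * ‖F0 ξ‖ ^ 2 + ‖F1 ξ‖ ^ 2 by positivity)
        calc _ = ‖ξ‖ ^ m * (‖ξ‖ ^ 2 * ‖F0 ξ‖ ^ 2 + ‖F1 ξ‖ ^ 2) := by ring
          _ ≤ _ := this
          _ = _ := by ring
      have hI0 : Integrable (fun ξ => ‖ξ‖ ^ (m + 2) * ‖F0 ξ‖ ^ 2) := by
        refine (hG.const_mul B).mono' (AEMeasurable.aestronglyMeasurable (by fun_prop))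
          (ae_of_all _ fun ξ => ?_)
        rw [Real.norm_of_nonneg (by positivity)]
        have : 0 ≤ ‖ξ‖ ^ m * ‖F1 ξ‖ ^ 2 := by positivity
        linarith [hsum ξ]
      have hI1 : Integrable (fun ξ => ‖ξ‖ ^ m * ‖F1 ξ‖ ^ 2) := by
        refine (hG.const_mul B).mono' (AEMeasurable.aestronglyMeasurable (by fun_prop))
          (ae_of_all _ fun ξ => ?_)
        rw [Real.norm_of_nonneg (by positivity)]
        have : 0 ≤ ‖ξ‖ ^ (m + 2) * ‖F0 ξ‖ ^ 2 := by positivity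
        linarith [hsum ξ]
      have hS0 : 0 < (∫ ξ, ‖ξ‖ ^ (m + 2) * ‖F0 ξ‖ ^ 2) + ∫ ξ, ‖ξ‖ ^ m * ‖F1 ξ‖ ^ 2 := by
        have n0 : 0 ≤ ∫ ξ, ‖ξ‖ ^ (m + 2) * ‖F0 ξ‖ ^ 2 := integral_nonneg fun ξ => by positivity
        have n1 : 0 ≤ ∫ ξ, ‖ξ‖ ^ m * ‖F1 ξ‖ ^ 2 := integral_nonneg fun ξ => by positivity
        by_cases h : F0 =ᵐ[(volume : Measure (EuclideanSpace ℝ (Fin n)))] 0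
        · have := aux_pos hn F1 m hI1 fun h1 => hne ⟨h, h1⟩
          linarith
        · have := aux_pos hn F0 (m + 2) hI0 h
          linarith
      have hS1 : (∫ ξ, ‖ξ‖ ^ (m + 2) * ‖F0 ξ‖ ^ 2) + (∫ ξ, ‖ξ‖ ^ m * ‖F1 ξ‖ ^ 2) ≤ B * C := by
        rw [← integral_add hI0 hI1]
        refine (integral_mono (hI0.add hI1) (hG.const_mul B) hsum).trans ?_
        rw [integral_const_mul]
        apply mul_le_mul_of_nonneg_left _ hB0
        linarith
      generalize (∫ ξ, ‖ξ‖ ^ (m + 2) * ‖F0 ξ‖ ^ 2) + (∫ ξ, ‖ξ‖ ^ m * ‖F1 ξ‖ ^ 2) = S at hS0 hS1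
      have hmR : (m : ℝ) = 2 ^ (j + 2) := by rw [hm]; push_cast; ring
      have hm0 : (0:ℝ) < m := by rw [hmR]; positivity
      have hm1 : (1:ℝ) ≤ m := by rw [hmR]; exact one_le_pow₀ (by norm_num)
      have hmn : m ≠ 0 := by positivity
      have hS2 : S ≤ (m / η * C) ^ m := by
        rw [mul_pow]
        refine hS1.trans (mul_le_mul_of_nonneg_left ?_ hB0)
        exact le_self_pow₀ hC1 hmn
      have hx : 0 < m / η * C := by positivity
      have hS3 : (m / η * C)⁻¹ ≤ S ^ (-(1:ℝ) / 2 ^ (j + 2)) := by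
        rw [← hmR]
        calc (m / η * C)⁻¹ = ((m / η * C) ^ m) ^ (-(1:ℝ) / m) := by
              rw [← Real.rpow_natCast, ← Real.rpow_mul hx.le, mul_div_cancel₀ _ hm0.ne',
                Real.rpow_neg_one]
          _ ≤ _ := Real.rpow_le_rpow_of_nonpos hS0 hS2
              (div_nonpos_of_nonpos_of_nonneg (by norm_num) hm0.le)
      refine le_trans (le_of_eq ?_) (mul_le_mul_of_nonneg_left hS3 (by positivity))
      rw [hmR, pow_add]
      field_simp
      norm_num
    have hpos : 0 < ENNReal.ofReal (η / 4 * C⁻¹) := by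
      rw [ENNReal.ofReal_pos]; positivity
    refine hpos.trans_le ?_
    exact le_limsup_of_frequently_le (Frequently.of_forall hbound)
end
end

section
/- Let n ≥ 1 and let (f_0,f_1) belong to the Pohozhaev class 𝒫: f_0, f_1 ∈ H^σ(ℝⁿ) for every σ ≥ 0, and limsup_{j→∞} 2^j ( ∫_{ℝⁿ} |ξ|^{4·2^j + 2} |f̂_0(ξ)|² dξ + ∫_{ℝⁿ} |ξ|^{4·2^j} |f̂_1(ξ)|² dξ )^{−1/2^{j+2}} > 0. Then (f_0,f_1) belongs to Manfrin's class ℬ_Δ: there exist a sequence ρ_j > 0 with ρ_j → ∞ and a constant η > 0 such that sup_{j∈ℕ} ∫_{|ξ| ≥ ρ_j} ( |ξ|⁴ |f̂_0(ξ)|² + |ξ|² |f̂_1(ξ)|² ) e^{η ρ_j² / |ξ|} / ρ_j² dξ < ∞. -/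
open MeasureTheory Filter
open scoped ENNReal NNReal

noncomputable section


lemma pm_pointwise (m : ℕ) (hm : 1 ≤ m) (δ t ρ η : ℝ) (hδ : 0 < δ)
    (hρ : ρ = Real.exp 1 * m / δ) (hη : η = 4 * δ / Real.exp 1) (ht : ρ ≤ t) :
    Real.exp (η * ρ ^ 2 / t) / ρ ^ 2 * t ^ 2 ≤ t ^ (4 * m) * (δ / m) ^ (4 * m) := by
  have hm' : (0:ℝ) < m := by exact_mod_cast hm
  have he := Real.exp_pos 1
  have hρ0 : 0 < ρ := by rw [hρ]; positivity
  have ht0 : 0 < t := lt_of_lt_of_le hρ0 ht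
  have h1 : η * ρ ^ 2 / t ≤ ((4 * m : ℕ) : ℝ) * 1 := by
    have e1 : η * ρ = 4 * m := by
      rw [hη, hρ]; field_simp
    rw [div_le_iff₀ ht0]
    have : η * ρ ^ 2 = 4 * m * ρ := by rw [← e1]; ring
    rw [this]; push_cast
    have := mul_le_mul_of_nonneg_left ht (by positivity : (0:ℝ) ≤ 4 * m)
    linarith
  have h2 : Real.exp (η * ρ ^ 2 / t) ≤ Real.exp 1 ^ (4 * m) := by
    rw [← Real.exp_nat_mul]; exact Real.exp_le_exp.mpr h1
  have h3 : (1:ℝ) ≤ t / ρ := by rw [le_div_iff₀ hρ0]; linarith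
  have h4 : (t / ρ) ^ 2 ≤ (t / ρ) ^ (4 * m) := pow_le_pow_right₀ h3 (by omega)
  calc Real.exp (η * ρ ^ 2 / t) / ρ ^ 2 * t ^ 2 = Real.exp (η * ρ ^ 2 / t) * (t / ρ) ^ 2 := by
        field_simp
    _ ≤ Real.exp 1 ^ (4 * m) * (t / ρ) ^ (4 * m) := by gcongr
    _ = t ^ (4 * m) * (δ / m) ^ (4 * m) := by
        rw [← mul_pow, ← mul_pow]; congr 1; rw [hρ]; field_simp

lemma pm_integrable {n : ℕ} (F : EuclideanSpace ℝ (Fin n) → ℂ)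
    (hm : AEMeasurable F (volume : Measure (EuclideanSpace ℝ (Fin n))))
    (hH : ∀ σ : ℝ, 0 ≤ σ →
      (∫⁻ ξ, ENNReal.ofReal ((1 + ‖ξ‖ ^ 2) ^ σ) * (‖F ξ‖₊ : ℝ≥0∞) ^ 2 < ⊤)) (k : ℕ) :
    Integrable (fun ξ : EuclideanSpace ℝ (Fin n) => ‖ξ‖ ^ (2 * k) * ‖F ξ‖ ^ 2) volume := by
  refine ⟨?_, ?_⟩
  · have : AEMeasurable (fun ξ : EuclideanSpace ℝ (Fin n) => ‖ξ‖ ^ (2 * k) * ‖F ξ‖ ^ 2) volume :=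
      (measurable_norm.pow_const _).aemeasurable.mul (hm.norm.pow_const _)
    exact this.aestronglyMeasurable
  · refine lt_of_le_of_lt (lintegral_mono fun ξ => ?_) (hH k (by positivity))
    rw [← ofReal_norm, Real.norm_of_nonneg (by positivity), ENNReal.ofReal_mul (by positivity),
      ENNReal.ofReal_pow (norm_nonneg (F ξ)), ofReal_norm, enorm_eq_nnnorm]
    gcongr
    rw [Real.rpow_natCast, pow_mul]
    gcongr
    linarith

lemma pm_bound (j : ℕ) (δ I : ℝ) (hδ : 0 < δ) (hI : 0 ≤ I)
    (h : δ < (2:ℝ) ^ j * I ^ (-(1:ℝ) / 2 ^ (j + 2))) :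
    I * (δ / ((2 ^ j : ℕ) : ℝ)) ^ (4 * 2 ^ j) ≤ 1 := by
  rcases hI.eq_or_lt with rfl | hI
  · simp
  have h2 : (0:ℝ) < 2 ^ j := by positivity
  have h1 : δ / ((2 ^ j : ℕ) : ℝ) ≤ I ^ (-(1:ℝ) / 2 ^ (j + 2)) := by
    push_cast
    rw [div_le_iff₀ h2]; linarith
  have h3 : (δ / ((2 ^ j : ℕ) : ℝ)) ^ (4 * 2 ^ j) ≤ I⁻¹ := by
    calc _ ≤ (I ^ (-(1:ℝ) / 2 ^ (j + 2))) ^ (4 * 2 ^ j) := by gcongr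
      _ = I⁻¹ := by
        rw [← Real.rpow_natCast, ← Real.rpow_mul hI.le, ← Real.rpow_neg_one]
        congr 1
        push_cast
        rw [pow_add]; field_simp; norm_num
  calc _ ≤ I * I⁻¹ := by gcongr
    _ = 1 := mul_inv_cancel₀ (ne_of_gt hI)

/-- the inclusion `𝒫 ⊂ ℬ_Δ` (Pohozhaev class is contained in
Manfrin's class), stated on the Fourier side: `F0 = f̂_0`, `F1 = f̂_1`. -/
theorem pohozhaev_subset_manfrin
    (n : ℕ) (hn : 1 ≤ n)
    (F0 F1 : EuclideanSpace ℝ (Fin n) → ℂ)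
    (hm0 : AEMeasurable F0 (volume : Measure (EuclideanSpace ℝ (Fin n))))
    (hm1 : AEMeasurable F1 (volume : Measure (EuclideanSpace ℝ (Fin n))))
    -- f_0, f_1 ∈ H^σ(ℝⁿ) for every σ ≥ 0
    (hHinf : ∀ σ : ℝ, 0 ≤ σ →
      (∫⁻ ξ, ENNReal.ofReal ((1 + ‖ξ‖ ^ 2) ^ σ) * (‖F0 ξ‖₊ : ℝ≥0∞) ^ 2 < ⊤) ∧
      (∫⁻ ξ, ENNReal.ofReal ((1 + ‖ξ‖ ^ 2) ^ σ) * (‖F1 ξ‖₊ : ℝ≥0∞) ^ 2 < ⊤))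
    -- the Pohozhaev limsup condition
    (hP : 0 < Filter.limsup (fun j : ℕ => ENNReal.ofReal ((2:ℝ) ^ j *
        ((∫ ξ, ‖ξ‖ ^ (4 * 2 ^ j + 2) * ‖F0 ξ‖ ^ 2) +
         (∫ ξ, ‖ξ‖ ^ (4 * 2 ^ j) * ‖F1 ξ‖ ^ 2)) ^ (-(1:ℝ) / 2 ^ (j + 2))))
      Filter.atTop) :
    -- conclusion: (f_0, f_1) ∈ ℬ_Δ
    ∃ ρ : ℕ → ℝ, (∀ j, 0 < ρ j) ∧ Filter.Tendsto ρ Filter.atTop Filter.atTop ∧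
      ∃ η > (0:ℝ), ∃ C : ℝ≥0∞, C < ⊤ ∧ ∀ j : ℕ,
        (∫⁻ ξ in {ξ : EuclideanSpace ℝ (Fin n) | ρ j ≤ ‖ξ‖},
          ((‖ξ‖₊ : ℝ≥0∞) ^ 4 * (‖F0 ξ‖₊ : ℝ≥0∞) ^ 2 +
           (‖ξ‖₊ : ℝ≥0∞) ^ 2 * (‖F1 ξ‖₊ : ℝ≥0∞) ^ 2) *
          ENNReal.ofReal (Real.exp (η * (ρ j) ^ 2 / ‖ξ‖) / (ρ j) ^ 2)) ≤ C := by
  obtain ⟨δ, hδ0, hδ⟩ := ENNReal.lt_iff_exists_nnreal_btwn.mp hP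
  have hδpos : (0:ℝ) < δ := by exact_mod_cast hδ0
  have hfreq := frequently_lt_of_lt_limsup (by isBoundedDefault) hδ
  obtain ⟨φ, hφ, hφP⟩ := extraction_of_frequently_atTop hfreq
  have he := Real.exp_pos 1
  refine ⟨fun k => Real.exp 1 * ((2 ^ φ k : ℕ) : ℝ) / δ, fun k => by positivity, ?_,
    4 * δ / Real.exp 1, by positivity, 1, by simp, ?_⟩
  · have h1 : Tendsto (fun k => ((2 ^ φ k : ℕ) : ℝ)) atTop atTop :=
      tendsto_natCast_atTop_atTop.comp
        ((tendsto_pow_atTop_atTop_of_one_lt (by norm_num : 1 < 2)).comp hφ.tendsto_atTop)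
    exact (h1.const_mul_atTop he).atTop_div_const hδpos
  intro k
  have hk := hφP k
  beta_reduce
  generalize φ k = j at hk ⊢
  have hJnt0 := pm_integrable F0 hm0 (fun σ hσ => (hHinf σ hσ).1) (2 * 2 ^ j + 1)
  have hJnt1 := pm_integrable F1 hm1 (fun σ hσ => (hHinf σ hσ).2) (2 * 2 ^ j)
  rw [show 2 * (2 * 2 ^ j + 1) = 4 * 2 ^ j + 2 by ring] at hJnt0
  rw [show 2 * (2 * 2 ^ j) = 4 * 2 ^ j by ring] at hJnt1
  rw [← integral_add hJnt0 hJnt1] at hk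
  have hJnt : Integrable (fun ξ : EuclideanSpace ℝ (Fin n) => ‖ξ‖ ^ (4 * 2 ^ j + 2) * ‖F0 ξ‖ ^ 2 +
      ‖ξ‖ ^ (4 * 2 ^ j) * ‖F1 ξ‖ ^ 2) volume := hJnt0.add hJnt1
  have hnn : ∀ ξ : EuclideanSpace ℝ (Fin n), 0 ≤ ‖ξ‖ ^ (4 * 2 ^ j + 2) * ‖F0 ξ‖ ^ 2 +
      ‖ξ‖ ^ (4 * 2 ^ j) * ‖F1 ξ‖ ^ 2 := fun ξ => by positivity
  have hb := pm_bound j δ _ hδpos (integral_nonneg hnn) (by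
    rw [← ENNReal.ofReal_coe_nnreal] at hk
    exact (ENNReal.ofReal_lt_ofReal_iff_of_nonneg hδpos.le).mp hk)
  rw [← integral_mul_const] at hb
  have hJnt' := hJnt.mul_const ((δ / ((2 ^ j : ℕ) : ℝ)) ^ (4 * 2 ^ j))
  have hb' := ENNReal.ofReal_le_ofReal hb
  rw [ofReal_integral_eq_lintegral_ofReal hJnt'
    (ae_of_all _ fun ξ => mul_nonneg (hnn ξ) (by positivity)), ENNReal.ofReal_one] at hb'
  refine le_trans ?_ hb'
  refine le_trans ?_ (setLIntegral_le_lintegral {ξ : EuclideanSpace ℝ (Fin n) |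
    Real.exp 1 * ((2 ^ j : ℕ) : ℝ) / δ ≤ ‖ξ‖} _)
  refine setLIntegral_mono' (measurableSet_le measurable_const measurable_norm) fun ξ hξ => ?_
  have hp := pm_pointwise (2 ^ j) Nat.one_le_two_pow δ ‖ξ‖ _ _ hδpos rfl rfl hξ
  have hc : ∀ x : EuclideanSpace ℝ (Fin n), (‖x‖₊ : ℝ≥0∞) = ENNReal.ofReal ‖x‖ := fun x => by
    rw [ofReal_norm, enorm_eq_nnnorm]
  have hc' : ∀ x : ℂ, (‖x‖₊ : ℝ≥0∞) = ENNReal.ofReal ‖x‖ := fun x => by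
    rw [ofReal_norm, enorm_eq_nnnorm]
  rw [hc, hc', hc', ← ENNReal.ofReal_pow (norm_nonneg _), ← ENNReal.ofReal_pow (norm_nonneg _),
    ← ENNReal.ofReal_pow (norm_nonneg _), ← ENNReal.ofReal_pow (norm_nonneg _),
    ← ENNReal.ofReal_mul (by positivity), ← ENNReal.ofReal_mul (by positivity),
    ← ENNReal.ofReal_add (by positivity) (by positivity), ← ENNReal.ofReal_mul (by positivity)]
  apply ENNReal.ofReal_le_ofReal
  have := mul_le_mul_of_nonneg_left hp (by positivity : 0 ≤ ‖ξ‖ ^ 2 * ‖F0 ξ‖ ^ 2 + ‖F1 ξ‖ ^ 2)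
  refine le_trans (le_of_eq ?_) (le_trans this (le_of_eq ?_))
  · ring
  · rw [pow_add]; ring
end
end

section
/- Let n ≥ 1 and s > 1. Then there exists a pair (f_0,f_1) with f_0 ∈ H¹(ℝⁿ), f_1 ∈ L²(ℝⁿ) belonging to the Gevrey class 𝒢^s — i.e. there exists η > 0 with ∫_{ℝⁿ} ( |ξ|² |f̂_0(ξ)|² + |f̂_1(ξ)|² ) e^{η |ξ|^{1/s}} dξ < ∞ — which does not belong to Manfrin's class ℬ_Δ: for every sequence ρ_j > 0 with ρ_j → ∞ and every η' > 0, sup_{j∈ℕ} ∫_{|ξ| ≥ ρ_j} ( |ξ|⁴ |f̂_0(ξ)|² + |ξ|² |f̂_1(ξ)|² ) e^{η' ρ_j² / |ξ|} / ρ_j² dξ = ∞ (or f_0 ∉ H²(ℝⁿ) or f_1 ∉ H¹(ℝⁿ)). -/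
open MeasureTheory Filter
open scoped ENNReal NNReal

noncomputable section

lemma aux_int (n : ℕ) (s : ℝ) (hs : 1 < s) :
    ∫⁻ ξ : EuclideanSpace ℝ (Fin n), ENNReal.ofReal (Real.exp (-‖ξ‖ ^ (1/s))) < ⊤ := by
  obtain ⟨k, hk⟩ := exists_nat_gt ((n:ℝ) * s)
  have hs0 : 0 < s := by linarith
  have hkn : (Module.finrank ℝ (EuclideanSpace ℝ (Fin n)) : ℝ) < k / s := by
    rw [finrank_euclideanSpace_fin, lt_div_iff₀ hs0]; exact hk
  have hI := (integrable_one_add_norm (μ := (volume : Measure (EuclideanSpace ℝ (Fin n)))) hkn)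
  have hI2 := hI.const_mul (Real.exp 1 * (k.factorial : ℝ))
  refine lt_of_le_of_lt (lintegral_mono fun ξ => ?_) hI2.lintegral_lt_top
  apply ENNReal.ofReal_le_ofReal
  have h0 : (0:ℝ) ≤ ‖ξ‖ := norm_nonneg ξ
  have h1 : (1 + ‖ξ‖) ^ (1/s) ≤ 1 + ‖ξ‖ ^ (1/s) := by
    have := Real.rpow_add_le_add_rpow (p := 1/s) (zero_le_one) h0 (by positivity)
      (by rw [div_le_one hs0]; exact hs.le)
    simpa using this
  have h2 : Real.exp (-‖ξ‖ ^ (1/s)) ≤ Real.exp 1 * Real.exp (-(1 + ‖ξ‖) ^ (1/s)) := by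
    rw [← Real.exp_add]; apply Real.exp_le_exp.2; linarith
  refine h2.trans ?_
  rw [mul_assoc]
  apply mul_le_mul_of_nonneg_left _ (Real.exp_pos _).le
  have hp : (0:ℝ) < 1 + ‖ξ‖ := by linarith
  have h3 := Real.pow_div_factorial_le_exp ((1 + ‖ξ‖) ^ (1/s)) (by positivity) k
  have h4 : ((1 + ‖ξ‖) ^ (1/s)) ^ k = (1 + ‖ξ‖) ^ (k/s) := by
    rw [← Real.rpow_natCast, ← Real.rpow_mul hp.le]; congr 1; ring
  rw [h4] at h3
  rw [Real.exp_neg, Real.rpow_neg hp.le]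
  have h5 : (0:ℝ) < (1 + ‖ξ‖) ^ (k/s) := by positivity
  have h6 : (0:ℝ) < k.factorial := by positivity
  calc _ ≤ ((1 + ‖ξ‖) ^ (k/s) / k.factorial)⁻¹ := by
        apply inv_anti₀ (by positivity) h3
    _ = _ := by rw [inv_div]; rfl

lemma aux_tend (s : ℝ) (hs : 1 < s) (c : ℝ) (hc : 0 < c) :
    Tendsto (fun r : ℝ => Real.exp (c * r / 2 - 2 * (2 * r) ^ (1/s))) atTop atTop := by
  have hs0 : 0 < s := by linarith
  apply Real.tendsto_exp_atTop.comp
  have hp : 0 < 1 - 1/s := by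
    rw [sub_pos, div_lt_one hs0]; exact hs
  have h1 : Tendsto (fun r : ℝ => r ^ (1/s) * (c / 2 * r ^ (1 - 1/s) - 2 * 2 ^ (1/s))) atTop atTop := by
    apply Tendsto.atTop_mul_atTop₀ (tendsto_rpow_atTop (by positivity))
    apply tendsto_atTop_add_const_right
    exact (tendsto_rpow_atTop hp).const_mul_atTop (by positivity)
  refine h1.congr' ?_
  filter_upwards [eventually_gt_atTop 0] with r hr
  have : r ^ (1/s) * r ^ (1 - 1/s) = r := by
    rw [← Real.rpow_add hr]; simp
  rw [Real.mul_rpow (by norm_num) hr.le]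
  linear_combination (c/2) * this

lemma aux_nn {E : Type*} [NormedAddCommGroup E] (x : E) : (‖x‖₊ : ℝ≥0∞) = ENNReal.ofReal ‖x‖ := by
  rw [ofReal_norm]; rfl

lemma aux_low (n : ℕ) (hn : 1 ≤ n) (s : ℝ) (hs : 1 < s) (c : ℝ) (hc : 0 < c) (r : ℝ) (hr : 1 ≤ r) :
    ENNReal.ofReal (Real.exp (c * r / 2 - 2 * (2 * r) ^ (1/s))) *
      volume (Metric.ball (0 : EuclideanSpace ℝ (Fin n)) (1/2)) ≤
    ∫⁻ ξ in {ξ : EuclideanSpace ℝ (Fin n) | r ≤ ‖ξ‖},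
      ENNReal.ofReal (‖ξ‖ ^ 2 * Real.exp (-‖ξ‖ ^ (1/s)) ^ 2 * (Real.exp (c * r ^ 2 / ‖ξ‖) / r ^ 2)) := by
  have hs0 : 0 < s := by linarith
  set x : EuclideanSpace ℝ (Fin n) := EuclideanSpace.single ⟨0, hn⟩ (3/2 * r) with hx
  have hxn : ‖x‖ = 3/2 * r := by
    rw [hx, EuclideanSpace.norm_single, Real.norm_of_nonneg (by positivity)]
  have hb : ∀ ξ ∈ Metric.ball x (1/2), r ≤ ‖ξ‖ ∧ ‖ξ‖ ≤ 2 * r := by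
    intro ξ hξ
    rw [mem_ball_iff_norm] at hξ
    have h := abs_le.1 (abs_norm_sub_norm_le ξ x)
    constructor <;> linarith [h.1, h.2]
  have hv : volume (Metric.ball (0 : EuclideanSpace ℝ (Fin n)) (1/2)) = volume (Metric.ball x (1/2)) :=
    (Measure.addHaar_ball_center volume x (1/2)).symm
  rw [hv, ← setLIntegral_const]
  refine (setLIntegral_mono' measurableSet_ball fun ξ hξ => ?_).trans
    (lintegral_mono_set fun ξ hξ => (hb ξ hξ).1)
  obtain ⟨h1, h2⟩ := hb ξ hξ
  apply ENNReal.ofReal_le_ofReal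
  have hξ0 : 0 < ‖ξ‖ := by linarith
  have e1 : ‖ξ‖ ^ (1/s) ≤ (2 * r) ^ (1/s) := Real.rpow_le_rpow hξ0.le h2 (by positivity)
  have e2 : c * r / 2 ≤ c * r ^ 2 / ‖ξ‖ := by
    rw [div_le_div_iff₀ (by norm_num) hξ0]
    have : c * r * ‖ξ‖ ≤ c * r * (2 * r) := by gcongr
    linarith
  have e3 : 1 ≤ ‖ξ‖ ^ 2 / r ^ 2 := by
    rw [one_le_div (by positivity)]; gcongr
  calc _ ≤ Real.exp (c * r ^ 2 / ‖ξ‖ + 2 * (-‖ξ‖ ^ (1/s))) := by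
        apply Real.exp_le_exp.2; linarith
    _ = 1 * (Real.exp (-‖ξ‖ ^ (1/s)) ^ 2 * Real.exp (c * r ^ 2 / ‖ξ‖)) := by
        rw [Real.exp_add, two_mul, Real.exp_add]; ring
    _ ≤ (‖ξ‖ ^ 2 / r ^ 2) * (Real.exp (-‖ξ‖ ^ (1/s)) ^ 2 * Real.exp (c * r ^ 2 / ‖ξ‖)) := by
        gcongr
    _ = _ := by ring

/-- the non-inclusion `𝒢^s ⊄ ℬ_Δ` for `s > 1`: there is a pair of
Gevrey data of order `s` which does not belong to Manfrin's class, stated on the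
Fourier side: `F0 = f̂_0`, `F1 = f̂_1`. -/
theorem gevrey_not_subset_manfrin
    (n : ℕ) (hn : 1 ≤ n) (s : ℝ) (hs : 1 < s) :
    ∃ F0 F1 : EuclideanSpace ℝ (Fin n) → ℂ,
      Measurable F0 ∧ Measurable F1 ∧
      -- f_0 ∈ H¹(ℝⁿ), f_1 ∈ L²(ℝⁿ)
      (∫⁻ ξ, ENNReal.ofReal (1 + ‖ξ‖ ^ 2) * (‖F0 ξ‖₊ : ℝ≥0∞) ^ 2 < ⊤) ∧
      (∫⁻ ξ, (‖F1 ξ‖₊ : ℝ≥0∞) ^ 2 < ⊤) ∧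
      -- (f_0, f_1) belongs to the Gevrey class 𝒢^s
      (∃ η > (0:ℝ), ∫⁻ ξ,
        ((‖ξ‖₊ : ℝ≥0∞) ^ 2 * (‖F0 ξ‖₊ : ℝ≥0∞) ^ 2 + (‖F1 ξ‖₊ : ℝ≥0∞) ^ 2) *
          ENNReal.ofReal (Real.exp (η * ‖ξ‖ ^ (1/s))) < ⊤) ∧
      -- but (f_0, f_1) ∉ ℬ_Δ
      ((∀ ρ : ℕ → ℝ, (∀ j, 0 < ρ j) → Filter.Tendsto ρ Filter.atTop Filter.atTop →
          ∀ η' : ℝ, 0 < η' →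
          (⨆ j : ℕ, ∫⁻ ξ in {ξ : EuclideanSpace ℝ (Fin n) | ρ j ≤ ‖ξ‖},
            ((‖ξ‖₊ : ℝ≥0∞) ^ 4 * (‖F0 ξ‖₊ : ℝ≥0∞) ^ 2 +
             (‖ξ‖₊ : ℝ≥0∞) ^ 2 * (‖F1 ξ‖₊ : ℝ≥0∞) ^ 2) *
            ENNReal.ofReal (Real.exp (η' * (ρ j) ^ 2 / ‖ξ‖) / (ρ j) ^ 2)) = ⊤) ∨
        (∫⁻ ξ, ENNReal.ofReal ((1 + ‖ξ‖ ^ 2) ^ (2:ℝ)) * (‖F0 ξ‖₊ : ℝ≥0∞) ^ 2 = ⊤) ∨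
        (∫⁻ ξ, ENNReal.ofReal (1 + ‖ξ‖ ^ 2) * (‖F1 ξ‖₊ : ℝ≥0∞) ^ 2 = ⊤)) := by
  have hs0 : 0 < s := by linarith
  have hF : ∀ ξ : EuclideanSpace ℝ (Fin n),
      (‖((Real.exp (-‖ξ‖ ^ (1/s)) : ℝ) : ℂ)‖₊ : ℝ≥0∞) = ENNReal.ofReal (Real.exp (-‖ξ‖ ^ (1/s))) := by
    intro ξ
    rw [aux_nn, Complex.norm_real, Real.norm_of_nonneg (Real.exp_pos _).le]
  refine ⟨fun _ => 0, fun ξ => ((Real.exp (-‖ξ‖ ^ (1/s)) : ℝ) : ℂ), measurable_const, ?_, ?_, ?_,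
    ⟨1, one_pos, ?_⟩, Or.inl ?_⟩
  · fun_prop
  · simp
  · refine lt_of_le_of_lt (lintegral_mono fun ξ => ?_) (aux_int n s hs)
    simp only [hF]
    rw [← ENNReal.ofReal_pow (Real.exp_pos _).le]
    apply ENNReal.ofReal_le_ofReal
    apply pow_le_of_le_one (Real.exp_pos _).le _ two_ne_zero
    rw [Real.exp_le_one_iff, neg_nonpos]
    positivity
  · refine lt_of_le_of_lt (lintegral_mono fun ξ => ?_) (aux_int n s hs)
    simp only [hF]
    rw [← ENNReal.ofReal_pow (Real.exp_pos _).le]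
    simp only [nnnorm_zero, ENNReal.coe_zero, ne_eq, OfNat.ofNat_ne_zero, not_false_eq_true,
      zero_pow, mul_zero, zero_add]
    rw [← ENNReal.ofReal_mul (by positivity)]
    apply ENNReal.ofReal_le_ofReal
    rw [pow_two, ← Real.exp_add, ← Real.exp_add]
    apply Real.exp_le_exp.2
    linarith
  · intro ρ hρ hlim c hc
    have ht : Tendsto (fun j => ENNReal.ofReal (Real.exp (c * ρ j / 2 - 2 * (2 * ρ j) ^ (1/s))) *
        volume (Metric.ball (0 : EuclideanSpace ℝ (Fin n)) (1/2))) atTop (nhds ⊤) := by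
      have h1 := ENNReal.tendsto_ofReal_atTop.comp ((aux_tend s hs c hc).comp hlim)
      have hv : volume (Metric.ball (0 : EuclideanSpace ℝ (Fin n)) (1/2)) ≠ 0 :=
        (Metric.measure_ball_pos _ _ (by norm_num)).ne'
      have h2 := ENNReal.Tendsto.mul_const (b := volume (Metric.ball (0 : EuclideanSpace ℝ (Fin n)) (1/2)))
        h1 (Or.inl ENNReal.top_ne_zero)
      rwa [ENNReal.top_mul hv] at h2
    rw [eq_top_iff]
    refine le_of_tendsto ht ?_
    filter_upwards [hlim.eventually_ge_atTop 1] with j hj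
    refine (aux_low n hn s hs c hc (ρ j) hj).trans (le_trans (le_of_eq ?_) (le_iSup _ j))
    congr 1
    ext ξ
    simp only [hF]
    simp only [nnnorm_zero, ENNReal.coe_zero, ne_eq, OfNat.ofNat_ne_zero, not_false_eq_true,
      zero_pow, mul_zero, zero_add]
    rw [aux_nn, ← ENNReal.ofReal_pow (Real.exp_pos _).le, ← ENNReal.ofReal_pow (norm_nonneg _),
      ← ENNReal.ofReal_mul (by positivity), ← ENNReal.ofReal_mul (by positivity)]
end
end
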